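/- (Existence of Nash equilibria.) Every finite game — a finite nonempty set N of players, finite nonempty action sets A_i, and payoff functions u_i : ∏_j A_j → ℝ — has at least one Nash equilibrium in mixed strategies: a profile s of mixed strategies such that for every player i and every mixed strategy t_i of player i, Σ_a u_i(a)·s(a) ≥ Σ_a u_i(a)·(t_i, s_{-i})(a). -/

import Mathlib

open Finset

/-- `σ` is a mixed strategy over the finite action set `A`:
nonnegative and summing to `1`. -/
def IsMixed {A : Type*} [Fintype A] (σ : A → ℝ) : Prop :=
  (∀ a, 0 ≤ σ a) ∧ ∑ a, σ a = 1

/-- The probability that the mixed strategy profile `s` assigns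
to the action profile `a`, namely `∏ i, s i (a i)`. -/
def profProb {ι : Type*} [Fintype ι] {A : ι → Type*}
    (s : ∀ i, A i → ℝ) (a : ∀ i, A i) : ℝ :=
  ∏ i, s i (a i)

/-- Expected value of the payoff function `u` under the mixed strategy profile `s`. -/
def expPay {ι : Type*} [Fintype ι] [DecidableEq ι] {A : ι → Type*} [∀ i, Fintype (A i)]
    (u : (∀ i, A i) → ℝ) (s : ∀ i, A i → ℝ) : ℝ :=
  ∑ a : ∀ i, A i, u a * profProb s a

/-- `t` is a best response of player `i` to the opponents' strategies in `s`,
with respect to the payoff function `u`: `t` is a mixed strategy maximizing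
the expected payoff over all mixed strategies of player `i`. -/
def IsBestResponse {ι : Type*} [Fintype ι] [DecidableEq ι] {A : ι → Type*}
    [∀ i, Fintype (A i)] (u : (∀ j, A j) → ℝ) (s : ∀ j, A j → ℝ) (i : ι)
    (t : A i → ℝ) : Prop :=
  IsMixed t ∧ ∀ t' : A i → ℝ, IsMixed t' →
    expPay u (Function.update s i t') ≤ expPay u (Function.update s i t)

/-- `s` is a Nash equilibrium of the standard game with utilities `u`. -/
def IsNashEq {ι : Type*} [Fintype ι] [DecidableEq ι] {A : ι → Type*}
    [∀ i, Fintype (A i)] (u : ι → (∀ j, A j) → ℝ) (s : ∀ i, A i → ℝ) : Prop :=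
  (∀ i, IsMixed (s i)) ∧ ∀ i, IsBestResponse (u i) s i (s i)

/-- `s` is a growth equilibrium of the capital game with capital payoffs `x`,
endowments `w`, capital dynamics `f`, and linearizations `v` (unit durations):
every player's strategy maximizes the time-average growth rate
`∑ a, v i (f i (x i a) (w i)) * s(a)` of their capital, given the others. -/
def IsGrowthEq {ι : Type*} [Fintype ι] [DecidableEq ι] {A : ι → Type*}
    [∀ i, Fintype (A i)] (x : ι → (∀ j, A j) → ℝ) (w : ι → ℝ)
    (f : ι → ℝ → ℝ → ℝ) (v : ι → ℝ → ℝ) (s : ∀ i, A i → ℝ) : Prop :=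
  IsNashEq (fun i a => v i (f i (x i a) (w i))) s

/-- Scarf dominance. -/
def ScarfDom {T I : Type*} (r : I → T → ℕ) (σ : Finset T) (C : Finset I) : Prop :=
  ∀ y, ∃ i ∈ C, ∀ x ∈ σ, r i y ≤ r i x

/-- Incidence of a door `(τ, D)` and a room `(σ, C)`. -/
def ScarfInc {T I : Type*} [DecidableEq T] [DecidableEq I]
    (τ : Finset T) (D : Finset I) (ρ : Finset T × Finset I) : Prop :=
  (ρ.2 = D ∧ ∃ x, x ∉ τ ∧ ρ.1 = insert x τ) ∨ (ρ.1 = τ ∧ ∃ j ∈ D, ρ.2 = D.erase j)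

lemma scarf_rooms_of_type {T I : Type*} [Fintype T] [DecidableEq T] [DecidableEq I]
    (r : I → T → ℕ) (hr : ∀ i, Function.Injective (r i))
    (τ : Finset T) (D : Finset I) (hdom : ScarfDom r τ D) (m : I → T)
    (hm : ∀ i, m i ∈ τ ∧ ∀ x ∈ τ, r i (m i) ≤ r i x) (j : I) (hj : j ∈ D)
    (hsurj : ∀ x ∈ τ, ∃ i ∈ D, i ≠ j ∧ m i = x) :
    ∃ ρ : Finset T × Finset I, ∀ ρ' : Finset T × Finset I,
      (ScarfDom r ρ'.1 ρ'.2 ∧ ((ρ'.1 = τ ∧ ρ'.2 = D.erase j) ∨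
        (ρ'.2 = D ∧ ∃ x, x ∉ τ ∧ ρ'.1 = insert x τ ∧
          (∀ i ∈ D, i ≠ j → r i (m i) < r i x) ∧ r j x < r j (m j)))) ↔ ρ' = ρ := by
  classical
  set M : Finset T := univ.filter (fun y => ∀ i ∈ D, i ≠ j → r i (m i) < r i y) with hM
  by_cases hne : M.Nonempty
  · obtain ⟨x, hxM, hx⟩ := M.exists_max_image (r j) hne
    have hxM' : ∀ i ∈ D, i ≠ j → r i (m i) < r i x := by simpa [hM] using hxM
    have hxτ : x ∉ τ := by
      intro h
      obtain ⟨i, hi, hij, rfl⟩ := hsurj x h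
      exact lt_irrefl _ (hxM' i hi hij)
    have hxj : r j x < r j (m j) := by
      obtain ⟨i, hi, h⟩ := hdom x
      have h1 := h _ (hm i).1
      by_cases hij : i = j
      · subst hij
        refine lt_of_le_of_ne h1 fun h2 => hxτ ?_
        rw [hr _ h2]; exact (hm i).1
      · exact absurd (hxM' i hi hij) (not_lt.2 h1)
    refine ⟨(insert x τ, D), ?_⟩
    rintro ⟨σ, C⟩
    constructor
    · rintro ⟨hd, ⟨h1, h2⟩ | ⟨h1, z, hz, h2, h3, h4⟩⟩
      · simp only at h1 h2 hd
        subst h1 h2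
        obtain ⟨i, hi, h⟩ := hd x
        rw [mem_erase] at hi
        exact absurd (hxM' i hi.2 hi.1) (not_lt.2 (h _ (hm i).1))
      · simp only at h1 h2 hd
        subst h1 h2
        have hzM : z ∈ M := by simpa [hM] using h3
        obtain ⟨i, hi, h⟩ := hd x
        have hij : i = j := by
          by_contra hij
          exact absurd (hxM' i hi hij) (not_lt.2 (h _ (mem_insert_of_mem (hm i).1)))
        subst hij
        have := hr _ (le_antisymm (h z (mem_insert_self _ _)) (hx z hzM))
        rw [this]
    · rintro h
      obtain ⟨rfl, rfl⟩ := Prod.mk.inj h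
      refine ⟨?_, Or.inr ⟨rfl, x, hxτ, rfl, hxM', hxj⟩⟩
      intro y
      by_cases hy : y ∈ M
      · refine ⟨j, hj, fun z hz => ?_⟩
        rcases mem_insert.1 hz with rfl | hz
        · exact hx y hy
        · exact (hx y hy).trans (hxj.le.trans ((hm j).2 z hz))
      · have : ∃ i ∈ C, i ≠ j ∧ r i y ≤ r i (m i) := by
          simpa [hM] using hy
        obtain ⟨i, hi, hij, hle⟩ := this
        refine ⟨i, hi, fun z hz => ?_⟩
        rcases mem_insert.1 hz with rfl | hz
        · exact hle.trans (hxM' i hi hij).le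
        · exact hle.trans ((hm i).2 z hz)
  · refine ⟨(τ, D.erase j), ?_⟩
    rintro ⟨σ, C⟩
    constructor
    · rintro ⟨hd, ⟨h1, h2⟩ | ⟨h1, z, hz, h2, h3, h4⟩⟩
      · simp only at h1 h2
        rw [h1, h2]
      · exact absurd ⟨z, by simpa [hM] using h3⟩ hne
    · intro h
      obtain ⟨rfl, rfl⟩ := Prod.mk.inj h
      refine ⟨?_, Or.inl ⟨rfl, rfl⟩⟩
      intro y
      have hy : y ∉ M := fun h => hne ⟨y, h⟩
      have : ∃ i ∈ D, i ≠ j ∧ r i y ≤ r i (m i) := by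
        simpa [hM] using hy
      obtain ⟨i, hi, hij, h⟩ := this
      exact ⟨i, mem_erase.2 ⟨hij, hi⟩, fun z hz => h.trans ((hm i).2 z hz)⟩

lemma scarf_two_rooms {T I : Type*} [Fintype T] [DecidableEq T] [DecidableEq I]
    (r : I → T → ℕ) (hr : ∀ i, Function.Injective (r i))
    (τ : Finset T) (D : Finset I) (hdom : ScarfDom r τ D) (hτ : τ.Nonempty)
    (hcard : D.card = τ.card + 1) :
    ∃ ρ₁ ρ₂ : Finset T × Finset I, ρ₁ ≠ ρ₂ ∧ ∀ ρ,
      (ScarfDom r ρ.1 ρ.2 ∧ ScarfInc τ D ρ) ↔ (ρ = ρ₁ ∨ ρ = ρ₂) := by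
  classical
  choose m hm1 hm2 using fun i => τ.exists_min_image (r i) hτ
  -- every point is a minimum
  have key : ∀ (E : Finset I), ScarfDom r τ E → ∀ x ∈ τ, ∃ i ∈ E, m i = x := by
    intro E hE x hx
    obtain ⟨i, hi, h⟩ := hE x
    exact ⟨i, hi, hr i (le_antisymm (hm2 i x hx) (h _ (hm1 i)))⟩
  obtain ⟨a, ha, b, hb, hab, hmab⟩ := exists_ne_map_eq_of_card_lt_of_maps_to
    (s := D) (t := τ) (by omega) (fun i _ => hm1 i)
  have inj : ∀ a ∈ D, ∀ b ∈ D, a ≠ b → m a = m b →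
      (∀ x ∈ τ, ∃ i ∈ D, i ≠ a ∧ m i = x) ∧ Set.InjOn m (D.erase a : Finset I) := by
    intro a ha b hb hab hmab
    have hs : ∀ x ∈ τ, ∃ i ∈ D, i ≠ a ∧ m i = x := by
      intro x hx
      obtain ⟨i, hi, rfl⟩ := key D hdom x hx
      by_cases hia : i = a
      · exact ⟨b, hb, hab.symm, by rw [hia, hmab]⟩
      · exact ⟨i, hi, hia, rfl⟩
    refine ⟨hs, ?_⟩
    have him : (D.erase a).image m = τ := by
      ext x
      simp only [mem_image, mem_erase]
      constructor
      · rintro ⟨i, -, rfl⟩; exact hm1 i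
      · intro hx
        obtain ⟨i, hi, h1, h2⟩ := hs x hx
        exact ⟨i, ⟨h1, hi⟩, h2⟩
    apply injOn_of_card_image_eq
    rw [him, card_erase_of_mem ha]; omega
  obtain ⟨sa, ia⟩ := inj a ha b hb hab hmab
  obtain ⟨sb, ib⟩ := inj b hb a ha hab.symm hmab.symm
  -- a `j` such that `m` stays surjective without `j` is `a` or `b`
  have hj_ab : ∀ j ∈ D, (∃ i ∈ D, i ≠ j ∧ m i = m j) → j = a ∨ j = b := by
    rintro j hj ⟨i, hi, hij, he⟩
    by_contra! hcon
    by_cases hia : i = a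
    · subst hia
      exact hij (ib (by simp [hi, hab]) (by simp [hj, hcon.2]) he)
    · exact hij (ia (by simp [hi, hia]) (by simp [hj, hcon.1]) he)
  obtain ⟨ρ₁, h₁⟩ := scarf_rooms_of_type r hr τ D hdom m (fun i => ⟨hm1 i, hm2 i⟩) a ha sa
  obtain ⟨ρ₂, h₂⟩ := scarf_rooms_of_type r hr τ D hdom m (fun i => ⟨hm1 i, hm2 i⟩) b hb sb
  refine ⟨ρ₁, ρ₂, ?_, ?_⟩
  · rintro rfl
    obtain ⟨-, h⟩ := (h₁ ρ₁).2 rfl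
    obtain ⟨-, h'⟩ := (h₂ ρ₁).2 rfl
    rcases h with ⟨e1, e2⟩ | ⟨e2, x, hx, e1, h3, h4⟩ <;>
    rcases h' with ⟨e1', e2'⟩ | ⟨e2', x', hx', e1', h3', h4'⟩
    · rw [e2] at e2'
      have : b ∈ D.erase a := mem_erase.2 ⟨hab.symm, hb⟩
      rw [e2'] at this
      simp at this
    · rw [e2'] at e2
      rw [e2] at ha; simp at ha
    · rw [e2'] at e2
      rw [← e2] at hb; simp at hb
    · have : x' = x := by
        have : x' ∈ insert x τ := by rw [← e1, e1']; exact mem_insert_self _ _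
        rcases mem_insert.1 this with h | h
        · exact h
        · exact absurd h hx'
      subst this
      exact lt_asymm h4 (h3' a ha hab)
  · intro ρ
    rw [← h₁, ← h₂, ← and_or_left]
    refine and_congr_right fun hd => ?_
    constructor
    · rintro (⟨e2, x, hx, e1⟩ | ⟨e1, j, hj, e2⟩)
      · -- x is the minimum for some j
        have hd' := hd
        rw [e1, e2] at hd'
        obtain ⟨j, hj, hjx⟩ := hd' x
        have hjlt : r j x < r j (m j) :=
          lt_of_le_of_ne (hjx _ (mem_insert_of_mem (hm1 j)))
            fun h => hx (by rw [hr _ h]; exact hm1 j)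
        have hmj : ∃ i ∈ D, i ≠ j ∧ m i = m j := by
          obtain ⟨i, hi, h⟩ := hd' (m j)
          refine ⟨i, hi, ?_, ?_⟩
          · rintro rfl
            exact absurd (h x (mem_insert_self _ _)) (not_le.2 hjlt)
          · exact hr i (le_antisymm (hm2 i _ (hm1 j)) (h _ (mem_insert_of_mem (hm1 i))))
        have surjx : ∀ y ∈ τ, ∃ i ∈ D, i ≠ j ∧ m i = y ∧ r i y < r i x := by
          intro y hy
          obtain ⟨i, hi, h⟩ := hd' y
          have hlt : r i y < r i x := lt_of_le_of_ne (h x (mem_insert_self _ _))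
              fun h => hx (by rw [← hr _ h]; exact hy)
          have hmi : m i = y :=
            hr i (le_antisymm (hm2 i _ hy) (h _ (mem_insert_of_mem (hm1 i))))
          refine ⟨i, hi, ?_, hmi, hlt⟩
          rintro rfl
          rw [← hmi] at hlt
          exact lt_asymm hlt hjlt
        have hothers : Set.InjOn m (D.erase j : Finset I) →
            (∀ i ∈ D, i ≠ j → r i (m i) < r i x) := by
          intro hinj i hi hij
          obtain ⟨k, hk, hkj, hki, hlt⟩ := surjx (m i) (hm1 i)
          have : k = i := hinj (by simp [hk, hkj]) (by simp [hi, hij]) hki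
          subst this
          exact hlt
        rcases hj_ab j hj hmj with rfl | rfl
        · exact Or.inl (Or.inr ⟨e2, x, hx, e1, hothers ia, hjlt⟩)
        · exact Or.inr (Or.inr ⟨e2, x, hx, e1, hothers ib, hjlt⟩)
      · rw [e1, e2] at hd
        obtain ⟨i, hi, h⟩ := key _ hd (m j) (hm1 j)
        rw [mem_erase] at hi
        rcases hj_ab j hj ⟨i, hi.2, hi.1, h⟩ with rfl | rfl
        · exact Or.inl (Or.inl ⟨e1, e2⟩)
        · exact Or.inr (Or.inl ⟨e1, e2⟩)
    · rintro ((⟨e1, e2⟩ | ⟨e2, x, hx, e1, -, -⟩) | (⟨e1, e2⟩ | ⟨e2, x, hx, e1, -, -⟩))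
      · exact Or.inr ⟨e1, a, ha, e2⟩
      · exact Or.inl ⟨e2, x, hx, e1⟩
      · exact Or.inr ⟨e1, b, hb, e2⟩
      · exact Or.inl ⟨e2, x, hx, e1⟩

/-- The door `τ` is almost colourful of type `i₀`. -/
def ScarfDoor {T I : Type*} (c : T → I) (i₀ : I) (τ : Finset T) : Prop :=
  Set.InjOn c (τ : Set T) ∧ ∀ x ∈ τ, c x ≠ i₀

lemma scarf_two_doors_aux {T I : Type*} [DecidableEq T] [DecidableEq I]
    (c : T → I) (i₀ : I) (τ : Finset T) (x : T) (hx : x ∉ τ) (hτ : ScarfDoor c i₀ τ)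
    (hnc : (insert x τ).image c ≠ insert i₀ (τ.image c)) :
    ∃ τ₁ τ₂ : Finset T, τ₁ ≠ τ₂ ∧ ∀ τ',
      (ScarfDoor c i₀ τ' ∧ ScarfInc τ' (insert i₀ (τ'.image c))
        (insert x τ, insert i₀ (τ.image c))) ↔ (τ' = τ₁ ∨ τ' = τ₂) := by
  classical
  have hcx : c x ≠ i₀ := by
    intro h; apply hnc; rw [image_insert, h]
  by_cases hcol : c x ∈ τ.image c
  · obtain ⟨y, hy, hyx⟩ := mem_image.1 hcol
    have hxy : x ≠ y := by rintro rfl; exact hx hy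
    have him : (insert x (τ.erase y)).image c = τ.image c := by
      ext i
      simp only [mem_image, mem_insert, mem_erase]
      constructor
      · rintro ⟨z, rfl | ⟨-, hz⟩, rfl⟩
        · exact ⟨y, hy, hyx⟩
        · exact ⟨z, hz, rfl⟩
      · rintro ⟨z, hz, rfl⟩
        by_cases hzy : z = y
        · exact ⟨x, Or.inl rfl, by rw [hzy, hyx]⟩
        · exact ⟨z, Or.inr ⟨hzy, hz⟩, rfl⟩
    refine ⟨τ, insert x (τ.erase y), ?_, ?_⟩
    · intro h; apply hx; rw [h]; exact mem_insert_self _ _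
    intro τ'
    constructor
    · rintro ⟨⟨hinj, hi₀⟩, ⟨h2, z, hz, h1⟩ | ⟨h1, j, hj, h2⟩⟩
      · simp only at h1 h2
        have hτ' : τ' = (insert x τ).erase z := by rw [h1, erase_insert hz]
        have hzm : z ∈ insert x τ := by rw [h1]; exact mem_insert_self _ _
        by_cases hzx : z = x
        · left; rw [hτ', hzx, erase_insert hx]
        by_cases hzy : z = y
        · right; rw [hτ', hzy, erase_insert_of_ne hxy]
        · exfalso
          apply hxy
          apply hinj _ _ hyx.symm
          · simp [hτ', Ne.symm hzx]
          · simp [hτ', Ne.symm hzy, hy]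
      · simp only at h1
        subst h1
        exact absurd (hinj (by simp) (by simp [hy]) hyx.symm) hxy
    · rintro (rfl | rfl)
      · exact ⟨hτ, Or.inl ⟨rfl, x, hx, rfl⟩⟩
      · refine ⟨⟨?_, ?_⟩, Or.inl ⟨by rw [him], y, by simp [hxy.symm], ?_⟩⟩
        · apply injOn_of_card_image_eq
          rw [him, card_insert_of_notMem (by simp [hx]), card_erase_of_mem hy,
            card_image_of_injOn hτ.1]
          have := card_pos.2 ⟨y, hy⟩
          omega
        · intro z hz
          rcases mem_insert.1 hz with rfl | hz
          · exact hcx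
          · exact hτ.2 z (mem_of_mem_erase hz)
        · simp only
          rw [insert_comm, insert_erase hy]
  · have hinjx : Set.InjOn c ((insert x τ : Finset T) : Set T) := by
      rw [coe_insert, Set.injOn_insert (by simpa using hx)]
      refine ⟨hτ.1, ?_⟩
      simpa using hcol
    refine ⟨τ, insert x τ, ?_, ?_⟩
    · intro h; apply hx; rw [h]; exact mem_insert_self _ _
    intro τ'
    constructor
    · rintro ⟨⟨hinj, hi₀⟩, ⟨h2, z, hz, h1⟩ | ⟨h1, j, hj, h2⟩⟩
      · simp only at h1 h2
        have hτ' : τ' = (insert x τ).erase z := by rw [h1, erase_insert hz]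
        by_cases hzx : z = x
        · left; rw [hτ', hzx, erase_insert hx]
        · exfalso
          have : c x ∈ insert i₀ (τ'.image c) :=
            mem_insert_of_mem (mem_image_of_mem c (by simp [hτ', Ne.symm hzx]))
          rw [← h2, mem_insert] at this
          exact this.elim hcx hcol
      · right; exact h1.symm
    · rintro (rfl | rfl)
      · exact ⟨hτ, Or.inl ⟨rfl, x, hx, rfl⟩⟩
      · refine ⟨⟨hinjx, ?_⟩, Or.inr ⟨rfl, c x, ?_, ?_⟩⟩
        · intro z hz
          rcases mem_insert.1 hz with rfl | hz
          · exact hcx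
          · exact hτ.2 z hz
        · simp
        · simp only
          rw [image_insert, insert_comm, erase_insert]
          simp only [mem_insert, not_or]
          exact ⟨hcx, hcol⟩

lemma scarf_two_doors {T I : Type*} [DecidableEq T] [DecidableEq I]
    (c : T → I) (i₀ : I) (ρ : Finset T × Finset I) (hnc : ρ.1.image c ≠ ρ.2)
    (τ : Finset T) (hτ : ScarfDoor c i₀ τ) (hinc : ScarfInc τ (insert i₀ (τ.image c)) ρ) :
    ∃ τ₁ τ₂ : Finset T, τ₁ ≠ τ₂ ∧ ∀ τ',
      (ScarfDoor c i₀ τ' ∧ ScarfInc τ' (insert i₀ (τ'.image c)) ρ) ↔ (τ' = τ₁ ∨ τ' = τ₂) := by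
  obtain ⟨σ, C⟩ := ρ
  rcases hinc with ⟨h2, x, hx, h1⟩ | ⟨h1, j, hj, h2⟩
  · simp only at h1 h2 hnc
    subst h1 h2
    exact scarf_two_doors_aux c i₀ τ x hx hτ hnc
  · simp only at h1 h2 hnc
    subst h1
    have hi₀ : i₀ ∉ σ.image c := by
      intro h
      obtain ⟨x, hx, h⟩ := mem_image.1 h
      exact hτ.2 x hx h
    rcases mem_insert.1 hj with rfl | hj
    · exfalso; apply hnc; rw [h2, erase_insert hi₀]
    · obtain ⟨x, hx, rfl⟩ := mem_image.1 hj
      have hC : C = insert i₀ ((σ.erase x).image c) := by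
        rw [h2, erase_insert_of_ne (hτ.2 x hx).symm]
        congr 1
        ext i
        simp only [mem_erase, mem_image]
        constructor
        · rintro ⟨h, y, hy, rfl⟩
          exact ⟨y, ⟨fun h' => h (by rw [h']), hy⟩, rfl⟩
        · rintro ⟨y, ⟨hyx, hy⟩, rfl⟩
          exact ⟨fun h => hyx (hτ.1 hy hx h), y, hy, rfl⟩
      have := scarf_two_doors_aux c i₀ (σ.erase x) x (by simp)
        ⟨hτ.1.mono (by simp), fun y hy => hτ.2 y (mem_of_mem_erase hy)⟩
        (by rw [insert_erase hx, ← hC]; exact hnc)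
      rw [insert_erase hx, ← hC] at this
      exact this

/-- Scarf's combinatorial lemma. -/
theorem scarf_colorful {T I : Type*} [Fintype T] [DecidableEq T] [Nonempty T]
    [Fintype I] [DecidableEq I] [Nonempty I]
    (r : I → T → ℕ) (hr : ∀ i, Function.Injective (r i)) (c : T → I) :
    ∃ σ : Finset T, ScarfDom r σ (σ.image c) := by
  classical
  by_contra! hcon
  let i₀ : I := Classical.arbitrary I
  let doors : Finset (Finset T) := univ.filter
    (fun τ => ScarfDoor c i₀ τ ∧ ScarfDom r τ (insert i₀ (τ.image c)))
  let rooms : Finset (Finset T × Finset I) := univ.filter (fun ρ => ScarfDom r ρ.1 ρ.2)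
  let R : Finset T → Finset T × Finset I → Prop :=
    fun τ ρ => ScarfInc τ (insert i₀ (τ.image c)) ρ
  have hcount := sum_card_bipartiteAbove_eq_sum_card_bipartiteBelow (s := doors) (t := rooms) R
  have hrooms : Even (∑ ρ ∈ rooms, #(doors.bipartiteBelow R ρ)) := by
    apply even_sum
    intro ρ hρ
    have hρd : ScarfDom r ρ.1 ρ.2 := by simpa [rooms] using hρ
    rcases (doors.bipartiteBelow R ρ).eq_empty_or_nonempty with h | ⟨τ, hτ⟩
    · rw [h]; simp
    · simp only [mem_bipartiteBelow, doors, mem_filter, mem_univ, true_and] at hτ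
      obtain ⟨τ₁, τ₂, hne, h⟩ := scarf_two_doors c i₀ ρ
        (fun h => hcon ρ.1 (by rw [h]; exact hρd)) τ hτ.1.1 hτ.2
      have : doors.bipartiteBelow R ρ = {τ₁, τ₂} := by
        ext τ'
        simp only [mem_bipartiteBelow, doors, mem_filter, mem_univ, true_and, mem_insert,
          mem_singleton]
        rw [← h τ']
        constructor
        · rintro ⟨⟨h1, -⟩, h2⟩; exact ⟨h1, h2⟩
        · rintro ⟨h1, h2⟩
          refine ⟨⟨h1, ?_⟩, h2⟩
          intro y
          obtain ⟨i, hi, hy⟩ := hρd y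
          rcases h2 with ⟨e2, x, hx, e1⟩ | ⟨e1, j, hj, e2⟩
          · exact ⟨i, e2 ▸ hi, fun x hx => hy x (by rw [e1]; exact mem_insert_of_mem hx)⟩
          · rw [e2] at hi
            exact ⟨i, mem_of_mem_erase hi, fun x hx => hy x (by rw [e1]; exact hx)⟩
      rw [this, card_pair hne]
      exact even_two
  have hempty : (∅ : Finset T) ∈ doors := by
    simp only [doors, mem_filter, mem_univ, true_and]
    refine ⟨⟨by simp, by simp⟩, fun y => ⟨i₀, by simp, by simp⟩⟩
  have hdoors : Even (∑ τ ∈ doors.erase ∅, #(rooms.bipartiteAbove R τ)) := by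
    apply even_sum
    intro τ hτ
    simp only [doors, mem_erase, mem_filter, mem_univ, true_and] at hτ
    obtain ⟨hne, hd, hdom⟩ := hτ
    obtain ⟨ρ₁, ρ₂, hne, h⟩ := scarf_two_rooms r hr τ _ hdom (nonempty_iff_ne_empty.2 hne) (by
      rw [card_insert_of_notMem, card_image_of_injOn hd.1]
      intro h
      obtain ⟨x, hx, h⟩ := mem_image.1 h
      exact hd.2 x hx h)
    have : rooms.bipartiteAbove R τ = {ρ₁, ρ₂} := by
      ext ρ
      simp only [mem_bipartiteAbove, rooms, mem_filter, mem_univ, true_and, mem_insert,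
          mem_singleton]
      exact h ρ
    rw [this, card_pair hne]
    exact even_two
  have hone : #(rooms.bipartiteAbove R ∅) = 1 := by
    obtain ⟨x, -, hx⟩ := (univ : Finset T).exists_max_image (r i₀) univ_nonempty
    rw [card_eq_one]
    refine ⟨({x}, {i₀}), ?_⟩
    ext ⟨σ, C⟩
    rw [mem_bipartiteAbove]
    simp only [rooms, mem_filter, mem_univ, true_and, mem_singleton, R,
      ScarfInc, image_empty, Prod.mk.injEq]
    constructor
    · rintro ⟨hd, ⟨e2, z, -, e1⟩ | ⟨e1, j, hj, e2⟩⟩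
      · have e1' : σ = {z} := by rw [e1]; rfl
        have e2' : C = {i₀} := by rw [e2]; rfl
        subst e1' e2'
        refine ⟨?_, rfl⟩
        obtain ⟨i, hi, h⟩ := hd x
        rw [mem_singleton] at hi
        subst hi
        rw [hr _ (le_antisymm (hx z (mem_univ _)) (h z (by simp)))]
      · exfalso
        have hj' : j = i₀ := by simpa using hj
        subst hj'
        obtain ⟨i, hi, -⟩ := hd (Classical.arbitrary T)
        rw [e2] at hi
        simp at hi
    · rintro ⟨rfl, rfl⟩
      exact ⟨fun y => ⟨i₀, by simp, by simpa using hx y (mem_univ _)⟩,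
        Or.inl ⟨rfl, x, by simp, rfl⟩⟩
  rw [← add_sum_erase _ _ hempty, hone] at hcount
  rw [← hcount] at hrooms
  exact absurd hrooms (by rw [Nat.not_even_iff_odd]; exact odd_one.add_even hdoors)

/-- Colourful small cells on the grid. -/
lemma grid_colorful {I : Type*} [Fintype I] [DecidableEq I] [Nonempty I] (k : ℕ)
    (c : (I → ℕ) → I) :
    ∃ x₀ : I → ℕ, ∑ i, x₀ i = k ∧ ∀ i, x₀ i ≤ Fintype.card I ∨
      ∃ y : I → ℕ, ∑ i, y i = k ∧ c y = i ∧ (∀ j, x₀ j ≤ y j + Fintype.card I) ∧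
        (∀ j, y j ≤ x₀ j + Fintype.card I) := by
  classical
  let T := {x : I → Fin (k + 1) // ∑ i, (x i : ℕ) = k}
  have mk : ∀ y : I → ℕ, ∑ i, y i = k → ∃ t : T, ∀ i, (t.1 i : ℕ) = y i := by
    intro y hy
    have hle : ∀ i, y i < k + 1 := by
      intro i
      have := single_le_sum (f := y) (fun j _ => Nat.zero_le _) (mem_univ i)
      omega
    exact ⟨⟨fun i => ⟨y i, hle i⟩, hy⟩, fun i => rfl⟩
  let i₁ : I := Classical.arbitrary I
  have : Nonempty T := by
    obtain ⟨t, -⟩ := mk (Pi.single i₁ k) (by simp)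
    exact ⟨t⟩
  let e := Fintype.equivFin T
  let r : I → T → ℕ := fun i x => (x.1 i : ℕ) * Fintype.card T + e x
  have hr : ∀ i, Function.Injective (r i) := by
    intro i x y h
    have h' := congrArg (· % Fintype.card T) h
    simp only [r, Nat.mul_add_mod_self_right, Nat.mod_eq_of_lt (e x).2,
      Nat.mod_eq_of_lt (e y).2] at h'
    exact e.injective (Fin.ext h')
  have hmono : ∀ i x y, r i x ≤ r i y → (x.1 i : ℕ) ≤ y.1 i := by
    intro i x y h
    by_contra! hlt
    have h1 := (e x).2
    have h2 := (e y).2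
    have h3 : ((y.1 i : ℕ) + 1) * Fintype.card T ≤ (x.1 i : ℕ) * Fintype.card T :=
      Nat.mul_le_mul_right _ hlt
    simp only [r] at h
    rw [add_mul] at h3
    omega
  obtain ⟨σ, hσ⟩ := scarf_colorful r hr (fun t => c (fun i => (t.1 i : ℕ)))
  set C := σ.image (fun t : T => c (fun i => (t.1 i : ℕ))) with hC
  have hCne : C.Nonempty := by
    obtain ⟨i, hi, -⟩ := hσ (Classical.arbitrary T)
    exact ⟨i, hi⟩
  have hσne : σ.Nonempty := by rwa [hC, image_nonempty] at hCne
  choose p hp1 hp2 using fun i => σ.exists_min_image (fun t => (t.1 i : ℕ)) hσne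
  let m : I → ℕ := fun i => ((p i).1 i : ℕ)
  have hm : ∀ i, ∀ x ∈ σ, m i ≤ (x.1 i : ℕ) := fun i x hx => hp2 i x hx
  have hsum : k < ∑ i ∈ C, (m i + 1) := by
    by_contra! hle
    obtain ⟨i₂, hi₂⟩ := hCne
    obtain ⟨t, ht⟩ := mk (fun i => (if i ∈ C then m i + 1 else 0) +
      (if i = i₂ then k - ∑ i ∈ C, (m i + 1) else 0)) (by
        rw [sum_add_distrib, sum_ite_mem, sum_ite_eq', univ_inter, if_pos (mem_univ _)]
        omega)
    obtain ⟨i, hi, h⟩ := hσ t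
    have h1 := hmono _ _ _ (h _ (hp1 i))
    rw [ht i, if_pos hi] at h1
    change m i + 1 + _ ≤ m i at h1
    omega
  rw [sum_add_distrib, sum_const, smul_eq_mul, mul_one] at hsum
  have hCc : #C ≤ Fintype.card I := card_le_univ C
  have hin : ∀ i ∈ C, ∀ x ∈ σ, (x.1 i : ℕ) ≤ m i + Fintype.card I := by
    intro i hi x hx
    have h1 : ∑ j ∈ C, (x.1 j : ℕ) ≤ k := by
      exact (sum_le_sum_of_subset (subset_univ _)).trans x.2.le
    have h2 : ∑ j ∈ C.erase i, m j ≤ ∑ j ∈ C.erase i, (x.1 j : ℕ) :=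
      sum_le_sum fun j _ => hm j x hx
    rw [← add_sum_erase _ _ hi] at h1 hsum
    omega
  have hout : ∀ i, i ∉ C → ∀ x ∈ σ, (x.1 i : ℕ) ≤ Fintype.card I := by
    intro i hi x hx
    have h1 : ∑ j ∈ insert i C, (x.1 j : ℕ) ≤ k := by
      exact (sum_le_sum_of_subset (subset_univ _)).trans x.2.le
    have h2 : ∑ j ∈ C, m j ≤ ∑ j ∈ C, (x.1 j : ℕ) :=
      sum_le_sum fun j _ => hm j x hx
    rw [sum_insert hi] at h1
    omega
  have hclose : ∀ x ∈ σ, ∀ y ∈ σ, ∀ i, (x.1 i : ℕ) ≤ y.1 i + Fintype.card I := by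
    intro x hx y hy i
    by_cases hi : i ∈ C
    · have := hin i hi x hx
      have := hm i y hy
      omega
    · have := hout i hi x hx
      omega
  obtain ⟨x, hx⟩ := hσne
  refine ⟨fun i => (x.1 i : ℕ), x.2, fun i => ?_⟩
  by_cases hi : i ∈ C
  · right
    obtain ⟨y, hy, hyi⟩ := mem_image.1 hi
    exact ⟨fun i => (y.1 i : ℕ), y.2, hyi, hclose x hx y hy, hclose y hy x hx⟩
  · left
    exact hout i hi x hx

lemma brouwer_approx {I : Type*} [Fintype I] [Nonempty I]
    (f : (I → ℝ) → I → ℝ) (hf : ContinuousOn f (stdSimplex ℝ I))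
    (hmaps : ∀ x ∈ stdSimplex ℝ I, f x ∈ stdSimplex ℝ I) (ε : ℝ) (hε : 0 < ε) :
    ∃ x ∈ stdSimplex ℝ I, ∀ i, x i ≤ f x i + 2 * ε := by
  classical
  have hu := (isCompact_stdSimplex ℝ I).uniformContinuousOn_of_continuous hf
  obtain ⟨δ, hδ, hu⟩ := Metric.uniformContinuousOn_iff.1 hu ε hε
  obtain ⟨k, hk⟩ := exists_nat_gt ((Fintype.card I : ℝ) / min δ ε)
  have hmin : 0 < min δ ε := lt_min hδ hε
  have hk0 : (0 : ℝ) < k := lt_of_le_of_lt (by positivity) hk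
  have hN : (Fintype.card I : ℝ) / k < min δ ε := by
    rw [div_lt_iff₀ hmin] at hk
    rw [div_lt_iff₀ hk0]; linarith
  let P : (I → ℕ) → I → ℝ := fun x i => (x i : ℝ) / k
  have hP : ∀ x : I → ℕ, ∑ i, x i = k → P x ∈ stdSimplex ℝ I := by
    intro x hx
    refine ⟨fun i => by positivity, ?_⟩
    simp only [P]
    rw [← sum_div, ← Nat.cast_sum, hx, div_self hk0.ne']
  have hcol : ∀ x : I → ℕ, ∃ i, ∑ i, x i = k → P x i ≤ f (P x) i := by
    intro x
    by_cases hx : ∑ i, x i = k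
    · by_contra! hcon
      have h1 := hP x hx
      have h2 := hmaps _ h1
      have := sum_lt_sum_of_nonempty (univ_nonempty (α := I)) (fun i _ => (hcon i).2)
      rw [h1.2, h2.2] at this
      exact lt_irrefl _ this
    · exact ⟨Classical.arbitrary I, fun h => absurd h hx⟩
  choose c hc using hcol
  obtain ⟨x, hx, h⟩ := grid_colorful k c
  refine ⟨P x, hP x hx, fun i => ?_⟩
  have hfx := (hmaps _ (hP x hx)).1
  have hcast : ∀ a b : ℕ, a ≤ b + Fintype.card I → (a : ℝ) / k ≤ b / k + (Fintype.card I : ℝ) / k := by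
    intro a b hab
    rw [← add_div]
    gcongr
    exact_mod_cast hab
  rcases h i with h | ⟨y, hy, hyi, h1, h2⟩
  · have := hcast (x i) 0 (by omega)
    have h3 := hfx i
    have h4 := min_le_right δ ε
    simp only [Nat.cast_zero, zero_div] at this
    change (x i : ℝ) / k ≤ _
    linarith
  · have hd : dist (P x) (P y) < δ := by
      refine lt_of_le_of_lt ?_ (hN.trans_le (min_le_left _ _))
      rw [dist_pi_le_iff (by positivity)]
      intro j
      rw [Real.dist_eq, abs_le]
      have := hcast _ _ (h1 j)
      have := hcast _ _ (h2 j)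
      simp only [P]
      constructor <;> linarith
    have hfd := hu _ (hP x hx) _ (hP y hy) hd
    have hfi := (dist_le_pi_dist (f (P x)) (f (P y)) i).trans_lt hfd
    rw [Real.dist_eq, abs_lt] at hfi
    have h5 := hc y hy
    rw [hyi] at h5
    have h6 := hcast _ _ (h1 i)
    have h4 := min_le_right δ ε
    change (x i : ℝ) / k ≤ _
    change (y i : ℝ) / k ≤ _ at h5
    linarith [hfi.1]

/-- Brouwer's fixed point theorem on the standard simplex. -/
theorem brouwer_simplex {I : Type*} [Fintype I] [Nonempty I]
    (f : (I → ℝ) → I → ℝ) (hf : ContinuousOn f (stdSimplex ℝ I))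
    (hmaps : ∀ x ∈ stdSimplex ℝ I, f x ∈ stdSimplex ℝ I) :
    ∃ x ∈ stdSimplex ℝ I, f x = x := by
  classical
  let g : (I → ℝ) → ℝ := fun x => ∑ i, max 0 (x i - f x i)
  have hg : ContinuousOn g (stdSimplex ℝ I) := by
    refine continuousOn_finsetSum _ fun i _ => ?_
    refine ContinuousOn.sup continuousOn_const ((continuous_apply i).continuousOn.sub ?_)
    exact (continuous_apply i).comp_continuousOn hf
  have hne : (stdSimplex ℝ I).Nonempty :=
    ⟨_, single_mem_stdSimplex ℝ (Classical.arbitrary I)⟩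
  obtain ⟨x, hx, hmin⟩ := (isCompact_stdSimplex ℝ I).exists_isMinOn hne hg
  have hgx : g x ≤ 0 := by
    by_contra! hpos
    have hcard : (0 : ℝ) < Fintype.card I := by exact_mod_cast Fintype.card_pos
    obtain ⟨y, hy, h⟩ := brouwer_approx f hf hmaps (g x / (4 * Fintype.card I)) (by positivity)
    have h1 : g x ≤ g y := hmin hy
    have h2 : g y ≤ ∑ _i : I, 2 * (g x / (4 * Fintype.card I)) := by
      refine sum_le_sum fun i _ => max_le (by positivity) ?_
      linarith [h i]
    rw [sum_const, card_univ, nsmul_eq_mul] at h2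
    have h3 : (Fintype.card I : ℝ) * (2 * (g x / (4 * Fintype.card I))) = g x / 2 := by
      field_simp; ring
    linarith
  have hle : ∀ i, x i ≤ f x i := by
    intro i
    have h1 : max 0 (x i - f x i) ≤ g x :=
      single_le_sum (f := fun i => max 0 (x i - f x i)) (fun j _ => le_max_left _ _) (mem_univ i)
    have := le_max_right 0 (x i - f x i)
    linarith
  refine ⟨x, hx, ?_⟩
  have hs : ∑ i, x i = ∑ i, f x i := by rw [hx.2, (hmaps x hx).2]
  have := (sum_eq_sum_iff_of_le (fun i _ => hle i)).1 hs
  funext i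
  exact (this i (mem_univ i)).symm

open Classical in
/-- Payoff of the pure action `a` of player `i` against `s`. -/
noncomputable def purePay {ι : Type*} [Fintype ι] [DecidableEq ι] {A : ι → Type*}
    [∀ i, Fintype (A i)] (u : (∀ j, A j) → ℝ) (s : ∀ j, A j → ℝ) (i : ι) (a : A i) : ℝ :=
  ∑ p : ∀ j, A j, if p i = a then u p * ∏ j ∈ univ.erase i, s j (p j) else 0

lemma expPay_update {ι : Type*} [Fintype ι] [DecidableEq ι] {A : ι → Type*}
    [∀ i, Fintype (A i)] (u : (∀ j, A j) → ℝ) (s : ∀ j, A j → ℝ) (i : ι) (t : A i → ℝ) :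
    expPay u (Function.update s i t) = ∑ a, t a * purePay u s i a := by
  classical
  unfold expPay purePay profProb
  simp_rw [mul_sum]
  rw [sum_comm]
  refine sum_congr rfl fun p _ => ?_
  rw [← mul_prod_erase univ _ (mem_univ i)]
  have : ∏ j ∈ univ.erase i, Function.update s i t j (p j) = ∏ j ∈ univ.erase i, s j (p j) := by
    refine prod_congr rfl fun j hj => ?_
    rw [Function.update_of_ne (ne_of_mem_erase hj)]
  rw [this, Function.update_self]
  simp only [mul_ite, mul_zero, sum_ite_eq, mem_univ, if_true]
  ring

lemma continuous_purePay {ι : Type*} [Fintype ι] [DecidableEq ι] {A : ι → Type*}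
    [∀ i, Fintype (A i)] (u : (∀ j, A j) → ℝ) (i : ι) (a : A i) :
    Continuous (fun s : ∀ j, A j → ℝ => purePay u s i a) := by
  classical
  unfold purePay
  refine continuous_finsetSum _ fun p _ => ?_
  split_ifs
  · fun_prop
  · fun_prop

/-- The gain of switching to the pure action `a`. -/
noncomputable def nashGain {ι : Type*} [Fintype ι] [DecidableEq ι] {A : ι → Type*}
    [∀ i, Fintype (A i)] (u : ι → (∀ j, A j) → ℝ) (s : ∀ j, A j → ℝ) (i : ι) (a : A i) : ℝ :=
  max 0 (purePay (u i) s i a - ∑ b, s i b * purePay (u i) s i b)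

/-- Nash's map. -/
noncomputable def nashMap {ι : Type*} [Fintype ι] [DecidableEq ι] {A : ι → Type*}
    [∀ i, Fintype (A i)] (u : ι → (∀ j, A j) → ℝ) (s : ∀ j, A j → ℝ) : ∀ j, A j → ℝ :=
  fun i a => (s i a + nashGain u s i a) / (1 + ∑ b, nashGain u s i b)

lemma nashGain_nonneg {ι : Type*} [Fintype ι] [DecidableEq ι] {A : ι → Type*}
    [∀ i, Fintype (A i)] (u : ι → (∀ j, A j) → ℝ) (s : ∀ j, A j → ℝ) (i : ι) (a : A i) :
    0 ≤ nashGain u s i a := le_max_left _ _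

lemma nashGain_sum_pos {ι : Type*} [Fintype ι] [DecidableEq ι] {A : ι → Type*}
    [∀ i, Fintype (A i)] (u : ι → (∀ j, A j) → ℝ) (s : ∀ j, A j → ℝ) (i : ι) :
    0 < 1 + ∑ b, nashGain u s i b := by
  have := sum_nonneg (s := univ) (fun b _ => nashGain_nonneg u s i b)
  linarith

lemma continuous_nashMap {ι : Type*} [Fintype ι] [DecidableEq ι] {A : ι → Type*}
    [∀ i, Fintype (A i)] (u : ι → (∀ j, A j) → ℝ) : Continuous (nashMap u) := by
  have hg : ∀ i a, Continuous (fun s : ∀ j, A j → ℝ => nashGain u s i a) := by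
    intro i a
    unfold nashGain
    refine continuous_const.max ((continuous_purePay _ _ _).sub ?_)
    refine continuous_finsetSum _ fun b _ => ?_
    exact (by fun_prop : Continuous fun s : ∀ j, A j → ℝ => s i b).mul (continuous_purePay _ _ _)
  refine continuous_pi fun i => continuous_pi fun a => ?_
  refine Continuous.div ?_ ?_ fun s => (nashGain_sum_pos u s i).ne'
  · exact (by fun_prop : Continuous fun s : ∀ j, A j → ℝ => s i a).add (hg i a)
  · exact continuous_const.add (continuous_finsetSum _ fun b _ => hg i b)

lemma nashMap_mixed {ι : Type*} [Fintype ι] [DecidableEq ι] {A : ι → Type*}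
    [∀ i, Fintype (A i)] (u : ι → (∀ j, A j) → ℝ) (s : ∀ j, A j → ℝ)
    (hs : ∀ i, IsMixed (s i)) (i : ι) : IsMixed (nashMap u s i) := by
  refine ⟨fun a => div_nonneg (add_nonneg ((hs i).1 a) (nashGain_nonneg _ _ _ _))
    (nashGain_sum_pos u s i).le, ?_⟩
  unfold nashMap
  rw [← sum_div, sum_add_distrib, (hs i).2, div_self (nashGain_sum_pos u s i).ne']

lemma nash_of_fixed {ι : Type*} [Fintype ι] [DecidableEq ι] {A : ι → Type*}
    [∀ i, Fintype (A i)] (u : ι → (∀ j, A j) → ℝ) (s : ∀ j, A j → ℝ)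
    (hs : ∀ i, IsMixed (s i)) (hfix : nashMap u s = s) : IsNashEq u s := by
  refine ⟨hs, fun i => ⟨hs i, fun t ht => ?_⟩⟩
  rw [expPay_update, expPay_update]
  set v := ∑ b, s i b * purePay (u i) s i b with hv
  set G := ∑ b, nashGain u s i b with hG
  have h1 : ∀ a, nashGain u s i a = G * s i a := by
    intro a
    have := congrFun (congrFun hfix i) a
    unfold nashMap at this
    rw [div_eq_iff (nashGain_sum_pos u s i).ne'] at this
    rw [← hG] at this
    linarith
  have h2 : ∀ a, nashGain u s i a * nashGain u s i a
      = G * (s i a * purePay (u i) s i a - s i a * v) := by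
    intro a
    have : nashGain u s i a * nashGain u s i a
        = nashGain u s i a * (purePay (u i) s i a - v) := by
      unfold nashGain
      rw [← hv]
      rcases le_total 0 (purePay (u i) s i a - v) with h | h
      · rw [max_eq_right h]
      · rw [max_eq_left h]; ring
    rw [this, h1 a]; ring
  have h3 : ∑ a, nashGain u s i a * nashGain u s i a = 0 := by
    simp_rw [h2]
    rw [← mul_sum, sum_sub_distrib, ← sum_mul, (hs i).2, ← hv]
    ring
  have h4 : ∀ a, purePay (u i) s i a ≤ v := by
    intro a
    have := (sum_eq_zero_iff_of_nonneg (fun a _ => mul_self_nonneg _)).1 h3 a (mem_univ a)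
    have h0 : nashGain u s i a = 0 := mul_self_eq_zero.1 this
    have := le_max_right 0 (purePay (u i) s i a - v)
    change purePay (u i) s i a - v ≤ nashGain u s i a at this
    linarith
  calc ∑ a, t a * purePay (u i) s i a ≤ ∑ a, t a * v :=
        sum_le_sum fun a _ => mul_le_mul_of_nonneg_left (h4 a) (ht.1 a)
    _ = v := by rw [← sum_mul, ht.2, one_mul]

/-- Retraction of the big simplex to the product of simplices. -/
noncomputable def simplexRetr {ι : Type*} [Fintype ι] {A : ι → Type*}
    [∀ i, Fintype (A i)] (x : (Σ i, A i) → ℝ) : ∀ j, A j → ℝ :=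
  fun i a => (Fintype.card ι * x ⟨i, a⟩ +
    max 0 (1 - Fintype.card ι * ∑ b, x ⟨i, b⟩) / Fintype.card (A i)) /
      max 1 (Fintype.card ι * ∑ b, x ⟨i, b⟩)

/-- **Existence of Nash equilibria.** Every finite game — a finite
nonempty set of players, finite nonempty action sets, and real payoff functions
— has at least one Nash equilibrium in mixed strategies. -/
theorem nashEq_exists
    {ι : Type*} [Fintype ι] [DecidableEq ι] [Nonempty ι] {A : ι → Type*}
    [∀ i, Fintype (A i)] [∀ i, Nonempty (A i)]
    (u : ι → (∀ j, A j) → ℝ) :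
    ∃ s : ∀ i, A i → ℝ, IsNashEq u s := by
  have hn : (0 : ℝ) < Fintype.card ι := by exact_mod_cast Fintype.card_pos
  have hpos : ∀ y : ℝ, 0 < max 1 y := fun y => lt_of_lt_of_le one_pos (le_max_left _ _)
  have hrc : Continuous (simplexRetr (ι := ι) (A := A)) := by
    refine continuous_pi fun i => continuous_pi fun a => ?_
    unfold simplexRetr
    refine Continuous.div (by fun_prop) (by fun_prop) fun x => (hpos _).ne'
  have hrm : ∀ x ∈ stdSimplex ℝ (Σ i, A i), ∀ i, IsMixed (simplexRetr x i) := by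
    intro x hx i
    have hA : (0 : ℝ) < Fintype.card (A i) := by exact_mod_cast Fintype.card_pos
    refine ⟨fun a => div_nonneg (add_nonneg (mul_nonneg hn.le (hx.1 _))
      (div_nonneg (le_max_left _ _) hA.le)) (hpos _).le, ?_⟩
    unfold simplexRetr
    rw [← sum_div, sum_add_distrib, ← mul_sum, sum_const, card_univ, nsmul_eq_mul,
      mul_div_cancel₀ _ hA.ne', div_eq_one_iff_eq (hpos _).ne']
    rcases le_total 1 (Fintype.card ι * ∑ b, x ⟨i, b⟩) with h | h
    · rw [max_eq_right h, max_eq_left (by linarith)]; ring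
    · rw [max_eq_left h, max_eq_right (by linarith)]; ring
  let f : ((Σ i, A i) → ℝ) → (Σ i, A i) → ℝ :=
    fun x q => nashMap u (simplexRetr x) q.1 q.2 / Fintype.card ι
  have hfc : Continuous f := by
    have h := (continuous_nashMap u).comp hrc
    refine continuous_pi fun q => Continuous.div_const ?_ _
    exact (continuous_apply q.2).comp ((continuous_apply q.1).comp h)
  have hfsum : ∀ x ∈ stdSimplex ℝ (Σ i, A i), ∀ i, ∑ a, f x ⟨i, a⟩ = 1 / Fintype.card ι := by
    intro x hx i
    simp only [f]
    rw [← sum_div, (nashMap_mixed u _ (hrm x hx) i).2]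
  have hne : Nonempty (Σ i, A i) :=
    ⟨⟨Classical.arbitrary ι, Classical.arbitrary _⟩⟩
  obtain ⟨x, hx, hfix⟩ := brouwer_simplex f hfc.continuousOn (by
    intro x hx
    refine ⟨fun q => div_nonneg ((nashMap_mixed u _ (hrm x hx) q.1).1 _) hn.le, ?_⟩
    rw [Fintype.sum_sigma]
    simp_rw [hfsum x hx]
    rw [sum_const, card_univ, nsmul_eq_mul, mul_one_div_cancel hn.ne'])
  refine ⟨simplexRetr x, nash_of_fixed u _ (hrm x hx) ?_⟩
  have hxs : ∀ i, Fintype.card ι * ∑ a, x ⟨i, a⟩ = 1 := by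
    intro i
    have := hfsum x hx i
    rw [hfix] at this
    rw [this, mul_one_div_cancel hn.ne']
  funext i a
  have h1 : simplexRetr x i a = Fintype.card ι * x ⟨i, a⟩ := by
    unfold simplexRetr
    rw [hxs i]; simp
  rw [h1]
  have h2 := congrFun hfix ⟨i, a⟩
  simp only [f] at h2
  rw [div_eq_iff hn.ne'] at h2
  rw [h2]; ring
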